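/- Let U ⊆ ℝ² be open, Γ a torsion-free affine connection on U with projective Schouten tensor P, and Λ ≠ 0 a real number. On M = U×ℝ² with coordinates (x¹,x²,ξ₁,ξ₂) define the metric g by g(∂_{ξ_i},∂_{x^j}) = g(∂_{x^j},∂_{ξ_i}) = ½δ_{ij}, g(∂_{x^i},∂_{x^j}) = −Σ_k Γ^k_{ij}ξ_k + Λξ_iξ_j + Λ^{-1}P_{(ij)}, g(∂_{ξ_i},∂_{ξ_j}) = 0 (the metric g = (dξ_i − (Γ^k_{ij}ξ_k − Λξ_iξ_j − Λ^{-1}P_{ji})dx^j)⊙dx^i, with a⊙b = ½(a⊗b+b⊗a)). Then g is everywhere nondegenerate, and its Ricci tensor (defined by the standard coordinate formulas) satisfies Ric(g) = 6Λ·g at every point of M; in particular g is an Einstein metric with nonzero constant scalar curvature 24Λ. -/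

import Mathlib

noncomputable section
open Matrix

/-- Points of the plane. -/
abbrev Pt2 : Type := Fin 2 → ℝ
/-- Points of the 4-manifold `U × ℝ²`, coordinates `(x¹, x², ξ₁, ξ₂)`. -/
abbrev Pt4 : Type := Fin 4 → ℝ

/-- Partial derivative of a function on the plane. -/
def pd2 (i : Fin 2) (f : Pt2 → ℝ) (x : Pt2) : ℝ := fderiv ℝ f x (Pi.single i 1)
/-- Partial derivative of a function on `ℝ⁴`. -/
def pd4 (a : Fin 4) (f : Pt4 → ℝ) (p : Pt4) : ℝ := fderiv ℝ f p (Pi.single a 1)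

/-- Base point `(x¹,x²)` of a point of `U × ℝ²`. -/
def bpt (p : Pt4) : Pt2 := ![p 0, p 1]
/-- Fibre coordinates `(ξ₁,ξ₂)` of a point of `U × ℝ²`. -/
def fib (p : Pt4) : Fin 2 → ℝ := ![p 2, p 3]

/-- An affine connection: `conn k i j` is the Christoffel symbol `Γ^k_{ij}`. -/
abbrev Conn : Type := Fin 2 → Fin 2 → Fin 2 → Pt2 → ℝ

/-- Curvature `R_{ij}{}^k{}_l` of a connection. -/
def curv (Γ : Conn) (i j k l : Fin 2) (x : Pt2) : ℝ :=
  pd2 i (Γ k j l) x - pd2 j (Γ k i l) x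
    + ∑ m, (Γ k i m x * Γ m j l x - Γ k j m x * Γ m i l x)

/-- Ricci tensor `R_{jl} = R_{kj}{}^k{}_l`. -/
def ricciT (Γ : Conn) (j l : Fin 2) (x : Pt2) : ℝ := ∑ k, curv Γ k j k l x

/-- Projective Schouten tensor `P_{ij} = R_{(ij)} + (1/3) R_{[ij]}`. -/
def schouten (Γ : Conn) (i j : Fin 2) (x : Pt2) : ℝ :=
  (ricciT Γ i j x + ricciT Γ j i x) / 2 + (ricciT Γ i j x - ricciT Γ j i x) / 6

/-- The one-parameter family of Einstein lift metrics
`g = (dξ_i − (Γ^k_{ij}ξ_k − Λξ_iξ_j − Λ⁻¹P_{ji})dx^j)⊙dx^i`: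
`g(∂_{ξ_i},∂_{x^j}) = ½δ_{ij}`, `g(∂_{x^i},∂_{x^j}) = −Σ_k Γ^k_{ij}ξ_k + Λξ_iξ_j + Λ⁻¹P_{(ij)}`,
`g(∂_{ξ_i},∂_{ξ_j}) = 0`. -/
def einsteinLift (Γ : Conn) (Λ : ℝ) (p : Pt4) : Matrix (Fin 4) (Fin 4) ℝ :=
  let A : Fin 2 → Fin 2 → ℝ := fun i j =>
    -(∑ k, Γ k i j (bpt p) * fib p k) + Λ * fib p i * fib p j
      + Λ⁻¹ * ((schouten Γ i j (bpt p) + schouten Γ j i (bpt p)) / 2)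
  !![A 0 0, A 0 1, 1/2, 0;
     A 1 0, A 1 1, 0, 1/2;
     1/2, 0, 0, 0;
     0, 1/2, 0, 0]

/-- Christoffel symbols `Γ^a_{bc} = ½ Σ_d g^{ad}(∂_b g_{dc} + ∂_c g_{bd} − ∂_d g_{bc})`
of a metric on an open subset of `ℝ⁴`. -/
def chris4 (g : Pt4 → Matrix (Fin 4) (Fin 4) ℝ) (a b c : Fin 4) (p : Pt4) : ℝ :=
  (1/2) * ∑ d, (g p)⁻¹ a d *
    (pd4 b (fun q => g q d c) p + pd4 c (fun q => g q b d) p - pd4 d (fun q => g q b c) p)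

/-- Ricci tensor `Ric_{bd} = Σ_a ∂_aΓ^a_{bd} − ∂_bΓ^a_{ad} + Σ_{a,c}(Γ^a_{ac}Γ^c_{bd} − Γ^a_{bc}Γ^c_{ad})`
of a metric on an open subset of `ℝ⁴`. -/
def ric4 (g : Pt4 → Matrix (Fin 4) (Fin 4) ℝ) (b d : Fin 4) (p : Pt4) : ℝ :=
  (∑ a, (pd4 a (fun q => chris4 g a b d q) p - pd4 b (fun q => chris4 g a a d q) p))
    + ∑ a, ∑ c, (chris4 g a a c p * chris4 g c b d p - chris4 g a b c p * chris4 g c a d p)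

/-! Write `x_i`, `ξ_i` for the coordinate directions and `A` for the `xx`-block of the metric. As `g`
is constant outside `A`, its Christoffel symbols are read off `∂A`; the ones with three base indices
are `Γ̂^k_{ij} = -∂A_{ij}/∂ξ_k`, and for `A` of class `C²`
`Ric(∂_{x_i}, ∂_{x_j}) = 2 R̂_{(ij)} + 2 A_{km} ∂²A_{ij}/∂ξ_k∂ξ_m`,
where `R̂` is the Ricci tensor of `Γ̂` as a connection in `x` with `ξ` frozen.

For the Einstein lift, `Γ̂ = Γ + υ ⊗ id + id ⊗ υ` with `υ = -Λξ` is projectively equivalent to `Γ`.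
For constant `υ` on a surface such a change adds `Γ^k_{ij}υ_k + υ_iυ_j` to the Ricci tensor, which is
`Λ (A_{ij} - Φ_{ij})` where `Φ` is the `ξ`-free part of `A`. The Hessian term gives `4Λ A_{ij}`,
so `Ric(∂_{x_i}, ∂_{x_j}) = 6Λ A_{ij} + 2 (R_{(ij)} - Λ Φ_{ij})`, and the last bracket vanishes for
`Φ = Λ⁻¹ P_{(ij)}` because `P_{(ij)} = R_{(ij)}`. -/

section ProjectiveChange

variable {ι R : Type*} [CommRing R]

/-- The part of the Ricci tensor that is quadratic in the Christoffel symbols `G k i j = G^k_{ij}`: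
`G^k_{kl} G^l_{ij} - G^k_{il} G^l_{kj}`. -/
def ricciQuad [Fintype ι] (G : ι → ι → ι → R) (i j : ι) : R :=
  ∑ k, ∑ l, (G k k l * G l i j - G k i l * G l k j)

/-- The projective change `G^k_{ij} + δ^k_i υ_j + δ^k_j υ_i` of Christoffel symbols by a one-form
`υ`; it preserves unparametrized geodesics. -/
def projectiveChange [DecidableEq ι] (G : ι → ι → ι → R) (υ : ι → R) (k i j : ι) : R :=
  G k i j + (1 : Matrix ι ι R) k i * υ j + (1 : Matrix ι ι R) k j * υ i

lemma ricciQuad_neg [Fintype ι] (G : ι → ι → ι → R) (i j : ι) :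
    ricciQuad (-G) i j = ricciQuad G i j := by
  simp [ricciQuad]

lemma ricciQuad_comm [Fintype ι] {G : ι → ι → ι → R} (hG : ∀ k i j, G k i j = G k j i) (i j : ι) :
    ricciQuad G i j = ricciQuad G j i := by
  simp only [ricciQuad, Finset.sum_sub_distrib]
  congr 1
  · simp only [hG _ i j]
  · rw [Finset.sum_comm]
    simp only [hG _ i, hG _ _ j, mul_comm]

lemma ricciQuad_projectiveChange [Fintype ι] [DecidableEq ι] {G : ι → ι → ι → R}
    (hG : ∀ k i j, G k i j = G k j i) (υ : ι → R) (i j : ι) :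
    ricciQuad (projectiveChange G υ) i j =
      ricciQuad G i j + (Fintype.card ι - 1) * (∑ k, G k i j * υ k + υ i * υ j) := by
  have trace_symm (m : ι) : ∑ k, G k m k = ∑ k, G k k m :=
    Finset.sum_congr rfl fun k _ => hG k m k
  have sum_delta : ∑ k, ∑ l, (if k = i then υ l * G l k j else 0) = ∑ l, G l i j * υ l := by
    rw [Finset.sum_comm]
    simp [mul_comm]
  simp only [ricciQuad, projectiveChange, Matrix.one_apply, mul_add, add_mul, ite_mul, mul_ite,
    one_mul, zero_mul, mul_zero, Finset.sum_add_distrib, Finset.sum_sub_distrib,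
    Finset.sum_ite_eq, Finset.sum_ite_eq', Finset.mem_univ, if_true, ← Finset.sum_mul,
    ← Finset.mul_sum, Finset.sum_const, Finset.card_univ, nsmul_eq_mul]
  rw [trace_symm, sum_delta]
  simp only [mul_comm (υ _) (G _ _ _)]
  ring

end ProjectiveChange

section Coordinates

/-- The index in `ℝ⁴` of the base coordinate `xⁱ`. -/
def baseIdx (i : Fin 2) : Fin 4 := Fin.castAdd 2 i

/-- The index in `ℝ⁴` of the fibre coordinate `ξ_i`. -/
def fibIdx (i : Fin 2) : Fin 4 := Fin.natAdd 2 i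

lemma exists_eq_baseIdx_or_fibIdx (a : Fin 4) : (∃ i, a = baseIdx i) ∨ ∃ i, a = fibIdx i :=
  Fin.addCases (m := 2) (n := 2) (fun i => .inl ⟨i, rfl⟩) (fun i => .inr ⟨i, rfl⟩) a

lemma sum_eq_sum_baseIdx_add_sum_fibIdx (f : Fin 4 → ℝ) :
    ∑ a, f a = ∑ i, f (baseIdx i) + ∑ i, f (fibIdx i) :=
  Fin.sum_univ_add (a := 2) (b := 2) f

/-- The base projection `bpt` as a continuous linear map. -/
def bptCLM : Pt4 →L[ℝ] Pt2 := .pi fun i => .proj (baseIdx i)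

lemma coe_bptCLM : ⇑bptCLM = bpt := by
  ext q i
  fin_cases i <;> rfl

lemma bptCLM_single_baseIdx (i : Fin 2) : bptCLM (Pi.single (baseIdx i) 1) = Pi.single i 1 := by
  ext j
  fin_cases i <;> fin_cases j <;> simp [bptCLM, baseIdx]

lemma bptCLM_single_fibIdx (i : Fin 2) : bptCLM (Pi.single (fibIdx i) 1) = 0 := by
  ext j
  fin_cases i <;> fin_cases j <;> simp [bptCLM, baseIdx, fibIdx]

lemma fib_eq_proj (k : Fin 2) :
    (fun q => fib q k) = ContinuousLinearMap.proj (R := ℝ) (φ := fun _ => ℝ) (fibIdx k) := by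
  ext q
  fin_cases k <;> rfl

@[fun_prop]
lemma contDiff_bpt {n : WithTop ℕ∞} : ContDiff ℝ n bpt :=
  coe_bptCLM ▸ bptCLM.contDiff

@[fun_prop]
lemma differentiable_bpt : Differentiable ℝ bpt :=
  contDiff_bpt.differentiable one_ne_zero

@[fun_prop]
lemma contDiff_fib {n : WithTop ℕ∞} (k : Fin 2) : ContDiff ℝ n (fun q => fib q k) :=
  fib_eq_proj k ▸ ContinuousLinearMap.contDiff _

@[fun_prop]
lemma differentiable_fib (k : Fin 2) : Differentiable ℝ (fun q => fib q k) :=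
  (contDiff_fib k).differentiable one_ne_zero

end Coordinates

section PartialDerivatives

lemma pd2_congr {f g : Pt2 → ℝ} {x : Pt2} (i : Fin 2) (h : f =ᶠ[nhds x] g) :
    pd2 i f x = pd2 i g x := by
  rw [pd2, pd2, h.fderiv_eq]

lemma contDiffAt_pd2 {n : WithTop ℕ∞} {f : Pt2 → ℝ} {x : Pt2} (i : Fin 2)
    (hf : ContDiffAt ℝ (n + 1) f x) : ContDiffAt ℝ n (pd2 i f) x :=
  (hf.fderiv_right le_rfl).clm_apply contDiffAt_const

variable {f g : Pt4 → ℝ} {p : Pt4} (a b : Fin 4)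

lemma pd4_congr (h : f =ᶠ[nhds p] g) : pd4 a f p = pd4 a g p := by
  rw [pd4, pd4, h.fderiv_eq]

lemma pd4_const (c : ℝ) (p : Pt4) : pd4 a (fun _ => c) p = 0 := by
  simp [pd4]

lemma pd4_neg : pd4 a (fun q => -f q) p = -pd4 a f p := by
  simp [pd4, fderiv_fun_neg]

lemma pd4_add (hf : DifferentiableAt ℝ f p) (hg : DifferentiableAt ℝ g p) :
    pd4 a (fun q => f q + g q) p = pd4 a f p + pd4 a g p := by
  simp [pd4, fderiv_fun_add hf hg]

lemma pd4_sub (hf : DifferentiableAt ℝ f p) (hg : DifferentiableAt ℝ g p) :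
    pd4 a (fun q => f q - g q) p = pd4 a f p - pd4 a g p := by
  simp [pd4, fderiv_fun_sub hf hg]

lemma pd4_mul (hf : DifferentiableAt ℝ f p) (hg : DifferentiableAt ℝ g p) :
    pd4 a (fun q => f q * g q) p = f p * pd4 a g p + g p * pd4 a f p := by
  simp [pd4, fderiv_fun_mul hf hg]

lemma pd4_sum {ι : Type*} {s : Finset ι} {F : ι → Pt4 → ℝ}
    (hF : ∀ k, DifferentiableAt ℝ (F k) p) :
    pd4 a (fun q => ∑ k ∈ s, F k q) p = ∑ k ∈ s, pd4 a (F k) p := by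
  simp [pd4, fderiv_fun_sum fun k _ => hF k]

lemma contDiffAt_pd4 {n : WithTop ℕ∞} (hf : ContDiffAt ℝ (n + 1) f p) :
    ContDiffAt ℝ n (pd4 a f) p :=
  (hf.fderiv_right le_rfl).clm_apply contDiffAt_const

lemma pd4_pd4_eq_fderiv_fderiv (hf : ContDiffAt ℝ 2 f p) :
    pd4 a (pd4 b f) p = fderiv ℝ (fderiv ℝ f) p (Pi.single a 1) (Pi.single b 1) := by
  have hf' : DifferentiableAt ℝ (fderiv ℝ f) p :=
    (hf.fderiv_right (m := 1) one_add_one_eq_two.le).differentiableAt one_ne_zero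
  change fderiv ℝ (fun q => fderiv ℝ f q (Pi.single b 1)) p (Pi.single a 1) = _
  simp [fderiv_clm_apply hf' (differentiableAt_const _)]

lemma pd4_comm (hf : ContDiffAt ℝ 2 f p) : pd4 a (pd4 b f) p = pd4 b (pd4 a f) p := by
  rw [pd4_pd4_eq_fderiv_fderiv a b hf, pd4_pd4_eq_fderiv_fderiv b a hf]
  exact (hf.isSymmSndFDerivAt (by simp)).eq _ _

variable (p)

lemma pd4_baseIdx_comp_bpt {f : Pt2 → ℝ} (hf : DifferentiableAt ℝ f (bpt p)) (i : Fin 2) :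
    pd4 (baseIdx i) (fun q => f (bpt q)) p = pd2 i f (bpt p) := by
  rw [← coe_bptCLM] at hf ⊢
  rw [pd4, fderiv_fun_comp p hf bptCLM.differentiableAt]
  simp [pd2, bptCLM_single_baseIdx]

lemma pd4_fibIdx_comp_bpt {f : Pt2 → ℝ} (hf : DifferentiableAt ℝ f (bpt p)) (i : Fin 2) :
    pd4 (fibIdx i) (fun q => f (bpt q)) p = 0 := by
  rw [← coe_bptCLM] at hf ⊢
  rw [pd4, fderiv_fun_comp p hf bptCLM.differentiableAt]
  simp [bptCLM_single_fibIdx]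

lemma pd4_baseIdx_fib (i k : Fin 2) : pd4 (baseIdx i) (fun q => fib q k) p = 0 := by
  rw [fib_eq_proj, pd4, ContinuousLinearMap.fderiv]
  fin_cases i <;> fin_cases k <;> simp [baseIdx, fibIdx]

lemma pd4_fibIdx_fib (i k : Fin 2) :
    pd4 (fibIdx i) (fun q => fib q k) p = (1 : Matrix (Fin 2) (Fin 2) ℝ) i k := by
  rw [fib_eq_proj, pd4, ContinuousLinearMap.fderiv]
  fin_cases i <;> fin_cases k <;> simp [fibIdx]

end PartialDerivatives

section WalkerMetric

/-- The metric `A_{ij} dxⁱ dxʲ + dxⁱ ⊙ dξ_i` on `ℝ⁴`, for which the fibres of `bpt` are null: a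
Walker metric in its normal form. The functions `A` are arbitrary; the bilinear form is symmetric
when `A i j = A j i`. -/
def walkerMetric (A : Fin 2 → Fin 2 → Pt4 → ℝ) (p : Pt4) : Matrix (Fin 4) (Fin 4) ℝ :=
  !![A 0 0 p, A 0 1 p, 1/2, 0;
     A 1 0 p, A 1 1 p, 0, 1/2;
     1/2, 0, 0, 0;
     0, 1/2, 0, 0]

variable (A : Fin 2 → Fin 2 → Pt4 → ℝ) (p : Pt4) (i j : Fin 2)

lemma walkerMetric_baseIdx_baseIdx : walkerMetric A p (baseIdx i) (baseIdx j) = A i j p := by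
  fin_cases i <;> fin_cases j <;> rfl

lemma walkerMetric_baseIdx_fibIdx :
    walkerMetric A p (baseIdx i) (fibIdx j) = 1 / 2 * (1 : Matrix (Fin 2) (Fin 2) ℝ) i j := by
  fin_cases i <;> fin_cases j <;> simp [walkerMetric, baseIdx, fibIdx]

lemma walkerMetric_fibIdx_baseIdx :
    walkerMetric A p (fibIdx i) (baseIdx j) = 1 / 2 * (1 : Matrix (Fin 2) (Fin 2) ℝ) i j := by
  fin_cases i <;> fin_cases j <;> simp [walkerMetric, baseIdx, fibIdx]

lemma walkerMetric_fibIdx_fibIdx : walkerMetric A p (fibIdx i) (fibIdx j) = 0 := by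
  fin_cases i <;> fin_cases j <;> simp [walkerMetric, fibIdx]

lemma walkerMetric_mul_inverse :
    walkerMetric A p * !![0, 0, 2, 0;
                          0, 0, 0, 2;
                          2, 0, -4 * A 0 0 p, -4 * A 0 1 p;
                          0, 2, -4 * A 1 0 p, -4 * A 1 1 p] = 1 := by
  ext i j
  fin_cases i <;> fin_cases j <;>
    simp [walkerMetric, Matrix.mul_apply, Fin.sum_univ_four] <;> ring

lemma det_walkerMetric_ne_zero : (walkerMetric A p).det ≠ 0 :=
  Matrix.det_ne_zero_of_right_inverse (walkerMetric_mul_inverse A p)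

lemma sum_inv_walkerMetric_baseIdx_mul (k : Fin 2) (v : Fin 4 → ℝ) :
    ∑ d, (walkerMetric A p)⁻¹ (baseIdx k) d * v d = 2 * v (fibIdx k) := by
  rw [Matrix.inv_eq_right_inv (walkerMetric_mul_inverse A p), Fin.sum_univ_four]
  fin_cases k <;> simp [baseIdx, fibIdx]

lemma sum_inv_walkerMetric_fibIdx_mul (k : Fin 2) (v : Fin 4 → ℝ) :
    ∑ d, (walkerMetric A p)⁻¹ (fibIdx k) d * v d =
      2 * v (baseIdx k) - 4 * ∑ m, A k m p * v (fibIdx m) := by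
  rw [Matrix.inv_eq_right_inv (walkerMetric_mul_inverse A p), Fin.sum_univ_four, Fin.sum_univ_two]
  fin_cases k <;> simp [baseIdx, fibIdx] <;> ring

lemma pd4_walkerMetric_fibIdx_left (a c : Fin 4) :
    pd4 a (fun q => walkerMetric A q (fibIdx i) c) p = 0 := by
  obtain ⟨j, rfl⟩ | ⟨j, rfl⟩ := exists_eq_baseIdx_or_fibIdx c
  · simp only [walkerMetric_fibIdx_baseIdx, pd4_const]
  · simp only [walkerMetric_fibIdx_fibIdx, pd4_const]

lemma pd4_walkerMetric_fibIdx_right (a b : Fin 4) :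
    pd4 a (fun q => walkerMetric A q b (fibIdx i)) p = 0 := by
  obtain ⟨j, rfl⟩ | ⟨j, rfl⟩ := exists_eq_baseIdx_or_fibIdx b
  · simp only [walkerMetric_baseIdx_fibIdx, pd4_const]
  · simp only [walkerMetric_fibIdx_fibIdx, pd4_const]

lemma chris4_walkerMetric_baseIdx (k : Fin 2) (b c : Fin 4) :
    chris4 (walkerMetric A) (baseIdx k) b c p =
      -pd4 (fibIdx k) (fun q => walkerMetric A q b c) p := by
  rw [chris4, sum_inv_walkerMetric_baseIdx_mul, pd4_walkerMetric_fibIdx_left,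
    pd4_walkerMetric_fibIdx_right]
  ring

lemma chris4_walkerMetric_fibIdx (k : Fin 2) (b c : Fin 4) :
    chris4 (walkerMetric A) (fibIdx k) b c p =
      pd4 b (fun q => walkerMetric A q (baseIdx k) c) p
        + pd4 c (fun q => walkerMetric A q b (baseIdx k)) p
        - pd4 (baseIdx k) (fun q => walkerMetric A q b c) p
        + 2 * ∑ m, A k m p * pd4 (fibIdx m) (fun q => walkerMetric A q b c) p := by
  simp only [chris4, sum_inv_walkerMetric_fibIdx_mul, pd4_walkerMetric_fibIdx_left,
    pd4_walkerMetric_fibIdx_right, zero_add, zero_sub, mul_neg, Finset.sum_neg_distrib]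
  ring

lemma chris4_walkerMetric_fibIdx_baseIdx_baseIdx (k : Fin 2) :
    chris4 (walkerMetric A) (fibIdx k) (baseIdx i) (baseIdx j) = fun q =>
      pd4 (baseIdx i) (A k j) q + pd4 (baseIdx j) (A i k) q - pd4 (baseIdx k) (A i j) q
        + 2 * ∑ m, A k m q * pd4 (fibIdx m) (A i j) q := by
  ext q
  simp only [chris4_walkerMetric_fibIdx, walkerMetric_baseIdx_baseIdx]

lemma ric4_walkerMetric_fibIdx_fibIdx :
    ric4 (walkerMetric A) (fibIdx i) (fibIdx j) p = 0 := by
  simp [ric4, sum_eq_sum_baseIdx_add_sum_fibIdx, chris4_walkerMetric_baseIdx,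
    chris4_walkerMetric_fibIdx, pd4_walkerMetric_fibIdx_left, pd4_walkerMetric_fibIdx_right,
    pd4_const]

lemma ric4_walkerMetric_baseIdx_fibIdx :
    ric4 (walkerMetric A) (baseIdx i) (fibIdx j) p =
      ∑ k, pd4 (fibIdx k) (pd4 (fibIdx j) (A i k)) p := by
  simp [ric4, sum_eq_sum_baseIdx_add_sum_fibIdx, chris4_walkerMetric_baseIdx,
    chris4_walkerMetric_fibIdx, pd4_walkerMetric_fibIdx_left, pd4_walkerMetric_fibIdx_right,
    walkerMetric_baseIdx_baseIdx, pd4_const]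

lemma ric4_walkerMetric_fibIdx_baseIdx :
    ric4 (walkerMetric A) (fibIdx i) (baseIdx j) p =
      ∑ k, pd4 (fibIdx k) (pd4 (fibIdx i) (A k j)) p := by
  simp [ric4, sum_eq_sum_baseIdx_add_sum_fibIdx, chris4_walkerMetric_baseIdx,
    chris4_walkerMetric_fibIdx, pd4_walkerMetric_fibIdx_left, pd4_walkerMetric_fibIdx_right,
    walkerMetric_baseIdx_baseIdx, pd4_const, pd4_neg]

-- The terms with a trace `Γ^a_{ac}` cancel, since the determinant of the metric is constant.
lemma ric4_walkerMetric_baseIdx_baseIdx_eq_chris4 :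
    ric4 (walkerMetric A) (baseIdx i) (baseIdx j) p =
      ∑ k, (pd4 (fibIdx k) (chris4 (walkerMetric A) (fibIdx k) (baseIdx i) (baseIdx j)) p
        - pd4 (baseIdx k) (pd4 (fibIdx k) (A i j)) p)
      - 2 * ∑ k, ∑ l, pd4 (fibIdx k) (A i l) p * pd4 (fibIdx l) (A k j) p := by
  simp only [ric4, sum_eq_sum_baseIdx_add_sum_fibIdx, chris4_walkerMetric_baseIdx,
    chris4_walkerMetric_fibIdx, chris4_walkerMetric_fibIdx_baseIdx_baseIdx,
    pd4_walkerMetric_fibIdx_left, pd4_walkerMetric_fibIdx_right, walkerMetric_baseIdx_baseIdx,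
    pd4_neg, Fin.sum_univ_two, mul_zero, add_zero, sub_zero]
  ring

variable {A p}

lemma pd4_fibIdx_chris4_walkerMetric_fibIdx_baseIdx_baseIdx
    (hA : ∀ i j, ContDiffAt ℝ 2 (A i j) p) (k n : Fin 2) :
    pd4 (fibIdx n) (chris4 (walkerMetric A) (fibIdx k) (baseIdx i) (baseIdx j)) p =
      pd4 (baseIdx i) (pd4 (fibIdx n) (A k j)) p + pd4 (baseIdx j) (pd4 (fibIdx n) (A i k)) p
        - pd4 (baseIdx k) (pd4 (fibIdx n) (A i j)) p
        + 2 * ∑ m, (A k m p * pd4 (fibIdx n) (pd4 (fibIdx m) (A i j)) p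
          + pd4 (fibIdx m) (A i j) p * pd4 (fibIdx n) (A k m) p) := by
  have hd (i j : Fin 2) : DifferentiableAt ℝ (A i j) p := (hA i j).differentiableAt two_ne_zero
  have hd' (a : Fin 4) (i j : Fin 2) : DifferentiableAt ℝ (pd4 a (A i j)) p :=
    (contDiffAt_pd4 a ((hA i j).of_le one_add_one_eq_two.le)).differentiableAt one_ne_zero
  rw [chris4_walkerMetric_fibIdx_baseIdx_baseIdx]
  simp (disch := fun_prop) only [pd4_add, pd4_sub, pd4_mul, pd4_sum, pd4_const,
    pd4_comm (fibIdx n) (baseIdx _) (hA _ _)]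
  ring

lemma ric4_walkerMetric_baseIdx_baseIdx (hA : ∀ i j, ContDiffAt ℝ 2 (A i j) p) :
    ric4 (walkerMetric A) (baseIdx i) (baseIdx j) p =
      ∑ k, (pd4 (baseIdx i) (pd4 (fibIdx k) (A k j)) p
          + pd4 (baseIdx j) (pd4 (fibIdx k) (A i k)) p
          - 2 * pd4 (baseIdx k) (pd4 (fibIdx k) (A i j)) p)
        + 2 * ∑ k, ∑ m, A k m p * pd4 (fibIdx k) (pd4 (fibIdx m) (A i j)) p
        + 2 * ricciQuad (fun k i j => pd4 (fibIdx k) (A i j) p) i j := by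
  simp only [ric4_walkerMetric_baseIdx_baseIdx_eq_chris4,
    pd4_fibIdx_chris4_walkerMetric_fibIdx_baseIdx_baseIdx i j hA, ricciQuad, Fin.sum_univ_two]
  ring

end WalkerMetric

section AffineRicci

variable {Γ : Conn} {x : Pt2}

lemma contDiffAt_ricciT {n : WithTop ℕ∞} (hΓ : ∀ k i j, ContDiffAt ℝ (n + 1) (Γ k i j) x)
    (i j : Fin 2) : ContDiffAt ℝ n (ricciT Γ i j) x := by
  have hΓ' (k i j : Fin 2) : ContDiffAt ℝ n (Γ k i j) x := (hΓ k i j).of_le le_self_add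
  have hdΓ (l k i j : Fin 2) : ContDiffAt ℝ n (pd2 l (Γ k i j)) x := contDiffAt_pd2 l (hΓ k i j)
  unfold ricciT curv
  fun_prop

lemma ricciT_eq_sum_pd2_add_ricciQuad (Γ : Conn) (i j : Fin 2) (x : Pt2) :
    ricciT Γ i j x = ∑ k, (pd2 k (Γ k i j) x - pd2 i (Γ k k j) x)
      + ricciQuad (fun k i j => Γ k i j x) i j := by
  simp only [ricciT, curv, ricciQuad, Finset.sum_add_distrib]

lemma ricciT_add_ricciT_swap (hΓ : ∀ k i j, Γ k i j =ᶠ[nhds x] Γ k j i) (i j : Fin 2) :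
    ricciT Γ i j x + ricciT Γ j i x =
      ∑ k, (2 * pd2 k (Γ k i j) x - pd2 i (Γ k k j) x - pd2 j (Γ k i k) x)
        + 2 * ricciQuad (fun k i j => Γ k i j x) i j := by
  rw [ricciT_eq_sum_pd2_add_ricciQuad, ricciT_eq_sum_pd2_add_ricciQuad,
    ricciQuad_comm (fun k i j => (hΓ k i j).eq_of_nhds) j i]
  simp only [fun k => pd2_congr k (hΓ k j i), fun k => pd2_congr j (hΓ k k i),
    Finset.sum_sub_distrib, ← Finset.mul_sum]
  ring

lemma schouten_add_schouten_swap (Γ : Conn) (i j : Fin 2) (x : Pt2) :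
    schouten Γ i j x + schouten Γ j i x = ricciT Γ i j x + ricciT Γ j i x := by
  simp only [schouten]
  ring

end AffineRicci

section ExtensionBlock

/-- The block `-Γ^k_{ij} ξ_k + Λ ξ_i ξ_j + Φ_{ij}`. Its Walker metric is the modified Riemannian
extension of `Γ`, of which the Einstein lift is the case `Φ_{ij} = Λ⁻¹ P_{(ij)}`. -/
def extensionBlock (Γ : Conn) (Φ : Fin 2 → Fin 2 → Pt2 → ℝ) (Λ : ℝ) (i j : Fin 2) (q : Pt4) : ℝ :=
  -(∑ k, Γ k i j (bpt q) * fib q k) + Λ * fib q i * fib q j + Φ i j (bpt q)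

lemma einsteinLift_eq_walkerMetric (Γ : Conn) (Λ : ℝ) :
    einsteinLift Γ Λ = walkerMetric (extensionBlock Γ
      (fun i j x => Λ⁻¹ * ((ricciT Γ i j x + ricciT Γ j i x) / 2)) Λ) := by
  ext p : 1
  simp only [einsteinLift, schouten_add_schouten_swap]
  rfl

variable {Γ : Conn} {Φ : Fin 2 → Fin 2 → Pt2 → ℝ} {Λ : ℝ} {p : Pt4}

lemma extensionBlock_comm (hΓ : ∀ k i j, Γ k i j (bpt p) = Γ k j i (bpt p))
    (hΦ : ∀ i j, Φ i j (bpt p) = Φ j i (bpt p)) (i j : Fin 2) :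
    extensionBlock Γ Φ Λ i j p = extensionBlock Γ Φ Λ j i p := by
  simp only [extensionBlock, hΓ _ i j, hΦ i j]
  ring

lemma contDiffAt_extensionBlock {n : WithTop ℕ∞} (hΓ : ∀ k i j, ContDiffAt ℝ n (Γ k i j) (bpt p))
    (hΦ : ∀ i j, ContDiffAt ℝ n (Φ i j) (bpt p)) (i j : Fin 2) :
    ContDiffAt ℝ n (extensionBlock Γ Φ Λ i j) p := by
  unfold extensionBlock
  fun_prop

lemma pd4_fibIdx_extensionBlock (hΓ : ∀ k i j, DifferentiableAt ℝ (Γ k i j) (bpt p))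
    (hΦ : ∀ i j, DifferentiableAt ℝ (Φ i j) (bpt p)) (k i j : Fin 2) :
    pd4 (fibIdx k) (extensionBlock Γ Φ Λ i j) p =
      -projectiveChange (fun k i j => Γ k i j (bpt p)) (-Λ • fib p) k i j := by
  have sum_delta : ∑ m, Γ m i j (bpt p) * (1 : Matrix (Fin 2) (Fin 2) ℝ) k m = Γ k i j (bpt p) := by
    simp [Matrix.one_apply]
  unfold extensionBlock
  simp (disch := fun_prop) only [pd4_sum, pd4_add, pd4_neg, pd4_mul, pd4_const, pd4_fibIdx_fib,
    pd4_fibIdx_comp_bpt _ (hΓ _ _ _), pd4_fibIdx_comp_bpt _ (hΦ _ _), mul_zero, add_zero,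
    sum_delta, projectiveChange, Pi.smul_apply, smul_eq_mul]
  ring

lemma pd4_fibIdx_extensionBlock_eventuallyEq (hΓ : ∀ k i j, ContDiffAt ℝ 1 (Γ k i j) (bpt p))
    (hΦ : ∀ i j, ContDiffAt ℝ 1 (Φ i j) (bpt p)) (k i j : Fin 2) :
    pd4 (fibIdx k) (extensionBlock Γ Φ Λ i j) =ᶠ[nhds p]
      fun q => -projectiveChange (fun k i j => Γ k i j (bpt q)) (-Λ • fib q) k i j := by
  have hbpt : Filter.Tendsto bpt (nhds p) (nhds (bpt p)) :=
    (contDiff_bpt (n := 0)).continuous.continuousAt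
  have eventually_differentiableAt {f : Pt2 → ℝ} (hf : ContDiffAt ℝ 1 f (bpt p)) :
      ∀ᶠ q in nhds p, DifferentiableAt ℝ f (bpt q) :=
    hbpt.eventually ((hf.eventually (by simp)).mono fun x hx => hx.differentiableAt one_ne_zero)
  have hΓ' : ∀ᶠ q in nhds p, ∀ k i j, DifferentiableAt ℝ (Γ k i j) (bpt q) := by
    simpa only [Filter.eventually_all] using fun k i j => eventually_differentiableAt (hΓ k i j)
  have hΦ' : ∀ᶠ q in nhds p, ∀ i j, DifferentiableAt ℝ (Φ i j) (bpt q) := by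
    simpa only [Filter.eventually_all] using fun i j => eventually_differentiableAt (hΦ i j)
  filter_upwards [hΓ', hΦ'] with q hΓq hΦq
  exact pd4_fibIdx_extensionBlock hΓq hΦq k i j

lemma pd4_baseIdx_pd4_fibIdx_extensionBlock (hΓ : ∀ k i j, ContDiffAt ℝ 1 (Γ k i j) (bpt p))
    (hΦ : ∀ i j, ContDiffAt ℝ 1 (Φ i j) (bpt p)) (l k i j : Fin 2) :
    pd4 (baseIdx l) (pd4 (fibIdx k) (extensionBlock Γ Φ Λ i j)) p =
      -pd2 l (Γ k i j) (bpt p) := by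
  have hd : DifferentiableAt ℝ (Γ k i j) (bpt p) := (hΓ k i j).differentiableAt one_ne_zero
  rw [pd4_congr _ (pd4_fibIdx_extensionBlock_eventuallyEq hΓ hΦ k i j)]
  simp only [projectiveChange, Pi.smul_apply, smul_eq_mul]
  simp (disch := fun_prop) only [pd4_add, pd4_neg, pd4_mul, pd4_const, pd4_baseIdx_fib,
    pd4_baseIdx_comp_bpt _ hd]
  ring

lemma pd4_fibIdx_pd4_fibIdx_extensionBlock (hΓ : ∀ k i j, ContDiffAt ℝ 1 (Γ k i j) (bpt p))
    (hΦ : ∀ i j, ContDiffAt ℝ 1 (Φ i j) (bpt p)) (l k i j : Fin 2) :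
    pd4 (fibIdx l) (pd4 (fibIdx k) (extensionBlock Γ Φ Λ i j)) p =
      Λ * ((1 : Matrix (Fin 2) (Fin 2) ℝ) k i * (1 : Matrix (Fin 2) (Fin 2) ℝ) l j
        + (1 : Matrix (Fin 2) (Fin 2) ℝ) k j * (1 : Matrix (Fin 2) (Fin 2) ℝ) l i) := by
  have hd : DifferentiableAt ℝ (Γ k i j) (bpt p) := (hΓ k i j).differentiableAt one_ne_zero
  rw [pd4_congr _ (pd4_fibIdx_extensionBlock_eventuallyEq hΓ hΦ k i j)]
  simp only [projectiveChange, Pi.smul_apply, smul_eq_mul]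
  simp (disch := fun_prop) only [pd4_add, pd4_neg, pd4_mul, pd4_const, pd4_fibIdx_fib,
    pd4_fibIdx_comp_bpt _ hd]
  ring

lemma ric4_extension_baseIdx_fibIdx (hΓ : ∀ k i j, ContDiffAt ℝ 1 (Γ k i j) (bpt p))
    (hΦ : ∀ i j, ContDiffAt ℝ 1 (Φ i j) (bpt p)) (i j : Fin 2) :
    ric4 (walkerMetric (extensionBlock Γ Φ Λ)) (baseIdx i) (fibIdx j) p =
      6 * Λ * walkerMetric (extensionBlock Γ Φ Λ) p (baseIdx i) (fibIdx j) := by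
  simp only [ric4_walkerMetric_baseIdx_fibIdx, pd4_fibIdx_pd4_fibIdx_extensionBlock hΓ hΦ,
    walkerMetric_baseIdx_fibIdx, Fin.sum_univ_two, Matrix.one_apply]
  fin_cases i <;> fin_cases j <;> simp <;> ring

lemma ric4_extension_fibIdx_baseIdx (hΓ : ∀ k i j, ContDiffAt ℝ 1 (Γ k i j) (bpt p))
    (hΦ : ∀ i j, ContDiffAt ℝ 1 (Φ i j) (bpt p)) (i j : Fin 2) :
    ric4 (walkerMetric (extensionBlock Γ Φ Λ)) (fibIdx i) (baseIdx j) p =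
      6 * Λ * walkerMetric (extensionBlock Γ Φ Λ) p (fibIdx i) (baseIdx j) := by
  simp only [ric4_walkerMetric_fibIdx_baseIdx, pd4_fibIdx_pd4_fibIdx_extensionBlock hΓ hΦ,
    walkerMetric_fibIdx_baseIdx, Fin.sum_univ_two, Matrix.one_apply]
  fin_cases i <;> fin_cases j <;> simp <;> ring

lemma sum_extensionBlock_mul_pd4_fibIdx_pd4_fibIdx
    (hΓ : ∀ k i j, ContDiffAt ℝ 1 (Γ k i j) (bpt p))
    (hΓsym : ∀ k i j, Γ k i j (bpt p) = Γ k j i (bpt p))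
    (hΦ : ∀ i j, ContDiffAt ℝ 1 (Φ i j) (bpt p))
    (hΦsym : ∀ i j, Φ i j (bpt p) = Φ j i (bpt p)) (i j : Fin 2) :
    ∑ k, ∑ m, extensionBlock Γ Φ Λ k m p
      * pd4 (fibIdx k) (pd4 (fibIdx m) (extensionBlock Γ Φ Λ i j)) p =
        2 * Λ * extensionBlock Γ Φ Λ i j p := by
  simp only [pd4_fibIdx_pd4_fibIdx_extensionBlock hΓ hΦ, Matrix.one_apply, mul_ite, mul_one,
    mul_zero, mul_add, Finset.sum_add_distrib, Finset.sum_ite_irrel, Finset.sum_ite_eq',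
    Finset.mem_univ, if_true, Finset.sum_const_zero, extensionBlock_comm hΓsym hΦsym j i]
  ring

lemma ricciQuad_pd4_fibIdx_extensionBlock (hΓ : ∀ k i j, DifferentiableAt ℝ (Γ k i j) (bpt p))
    (hΓsym : ∀ k i j, Γ k i j (bpt p) = Γ k j i (bpt p))
    (hΦ : ∀ i j, DifferentiableAt ℝ (Φ i j) (bpt p)) (i j : Fin 2) :
    ricciQuad (fun k i j => pd4 (fibIdx k) (extensionBlock Γ Φ Λ i j) p) i j =
      ricciQuad (fun k i j => Γ k i j (bpt p)) i j
        + Λ * (extensionBlock Γ Φ Λ i j p - Φ i j (bpt p)) := by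
  have pd4_eq : (fun k i j => pd4 (fibIdx k) (extensionBlock Γ Φ Λ i j) p) =
      -projectiveChange (fun k i j => Γ k i j (bpt p)) (-Λ • fib p) := by
    ext k i j
    exact pd4_fibIdx_extensionBlock hΓ hΦ k i j
  rw [pd4_eq, ricciQuad_neg, ricciQuad_projectiveChange hΓsym]
  simp only [extensionBlock, Fintype.card_fin, Pi.smul_apply, smul_eq_mul, Fin.sum_univ_two]
  push_cast
  ring

lemma ric4_extension_baseIdx_baseIdx (hΓ : ∀ k i j, ContDiffAt ℝ 2 (Γ k i j) (bpt p))
    (hΓsym : ∀ k i j, Γ k i j =ᶠ[nhds (bpt p)] Γ k j i)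
    (hΦ : ∀ i j, ContDiffAt ℝ 2 (Φ i j) (bpt p))
    (hΦsym : ∀ i j, Φ i j (bpt p) = Φ j i (bpt p)) (i j : Fin 2) :
    ric4 (walkerMetric (extensionBlock Γ Φ Λ)) (baseIdx i) (baseIdx j) p =
      6 * Λ * walkerMetric (extensionBlock Γ Φ Λ) p (baseIdx i) (baseIdx j)
        + (ricciT Γ i j (bpt p) + ricciT Γ j i (bpt p) - 2 * Λ * Φ i j (bpt p)) := by
  have hΓ₁ (k i j : Fin 2) := (hΓ k i j).of_le one_le_two
  have hΦ₁ (i j : Fin 2) := (hΦ i j).of_le one_le_two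
  have hΓp (k i j : Fin 2) := (hΓsym k i j).eq_of_nhds
  rw [ric4_walkerMetric_baseIdx_baseIdx i j (contDiffAt_extensionBlock hΓ hΦ),
    sum_extensionBlock_mul_pd4_fibIdx_pd4_fibIdx hΓ₁ hΓp hΦ₁ hΦsym,
    ricciQuad_pd4_fibIdx_extensionBlock (fun k i j => (hΓ k i j).differentiableAt two_ne_zero) hΓp
      (fun i j => (hΦ i j).differentiableAt two_ne_zero),
    ricciT_add_ricciT_swap hΓsym, walkerMetric_baseIdx_baseIdx]
  simp only [pd4_baseIdx_pd4_fibIdx_extensionBlock hΓ₁ hΦ₁, Finset.sum_sub_distrib,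
    Finset.sum_add_distrib, Finset.sum_neg_distrib, ← Finset.mul_sum]
  ring

end ExtensionBlock

theorem einsteinLift_isEinstein_general
    (U : Set Pt2) (hUopen : IsOpen U)
    (Γ : Conn) (hΓ : ∀ k i j, ContDiffOn ℝ 3 (Γ k i j) U)
    (hΓsym : ∀ k i j, ∀ x ∈ U, Γ k i j x = Γ k j i x)
    (Λ : ℝ) (hΛ : Λ ≠ 0)
    (p : Pt4) (hp : bpt p ∈ U) :
    (einsteinLift Γ Λ p).det ≠ 0 ∧
      ∀ b d, ric4 (einsteinLift Γ Λ) b d p = 6 * Λ * einsteinLift Γ Λ p b d := by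
  have hU : U ∈ nhds (bpt p) := hUopen.mem_nhds hp
  have hΓ₃ (k i j : Fin 2) : ContDiffAt ℝ (2 + 1) (Γ k i j) (bpt p) :=
    two_add_one_eq_three (R := WithTop ℕ∞) ▸ (hΓ k i j).contDiffAt hU
  have hΓ₂ (k i j : Fin 2) := (hΓ₃ k i j).of_le le_self_add
  have hΓ₁ (k i j : Fin 2) := (hΓ₂ k i j).of_le one_le_two
  have hR := contDiffAt_ricciT hΓ₃
  have hΦ (i j : Fin 2) : ContDiffAt ℝ 2
      (fun x => Λ⁻¹ * ((ricciT Γ i j x + ricciT Γ j i x) / 2)) (bpt p) := by fun_prop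
  have hΦ₁ (i j : Fin 2) := (hΦ i j).of_le one_le_two
  rw [einsteinLift_eq_walkerMetric]
  refine ⟨det_walkerMetric_ne_zero _ p, fun b d => ?_⟩
  obtain ⟨i, rfl⟩ | ⟨i, rfl⟩ := exists_eq_baseIdx_or_fibIdx b <;>
    obtain ⟨j, rfl⟩ | ⟨j, rfl⟩ := exists_eq_baseIdx_or_fibIdx d
  · rw [ric4_extension_baseIdx_baseIdx hΓ₂ (fun k i j => Filter.eventually_of_mem hU (hΓsym k i j))
      hΦ (fun i j => by ring)]
    field_simp
    ring
  · exact ric4_extension_baseIdx_fibIdx hΓ₁ hΦ₁ i j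
  · exact ric4_extension_fibIdx_baseIdx hΓ₁ hΦ₁ i j
  · rw [ric4_walkerMetric_fibIdx_fibIdx, walkerMetric_fibIdx_fibIdx, mul_zero]

/-- The Einstein lift metric of a projective surface with parameter `Λ ≠ 0` is
nondegenerate and Einstein: `Ric(g) = 6Λ·g`, so its scalar curvature is the nonzero
constant `24Λ`. -/
theorem einsteinLift_isEinstein
    (U : Set Pt2) (hUopen : IsOpen U)
    (Γ : Conn) (hΓsmooth : ∀ k i j, ContDiffOn ℝ (⊤ : ℕ∞) (Γ k i j) U)
    (hΓsym : ∀ k i j, ∀ x ∈ U, Γ k i j x = Γ k j i x)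
    (Λ : ℝ) (hΛ : Λ ≠ 0)
    (p : Pt4) (hp : bpt p ∈ U) :
    (einsteinLift Γ Λ p).det ≠ 0 ∧
      ∀ b d, ric4 (einsteinLift Γ Λ) b d p = 6 * Λ * einsteinLift Γ Λ p b d :=
  einsteinLift_isEinstein_general U hUopen Γ
    (fun k i j => contDiffOn_infty.1 (hΓsmooth k i j) 3) hΓsym Λ hΛ p hp
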